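/- arXiv:1207.7295 — 3 statements merged into one kernel-verified Lean document; each statement's English description precedes it below -/
import Mathlib

section
/- For all n ≥ 2, 0 ≤ k ≤ n−2, and i ∈ ℕ: the number of Dyck paths Q of semilength n such that the fiber of the parent map containing Q has cardinality k+2 and Q has the maximal rank in its fiber and rank(Q) = i, equals the number of Dyck paths Q' of semilength n such that the fiber containing Q' has cardinality k+2, Q' has the minimal rank in its fiber, and rank(Q') = i − k − 1 (this count being 0 if i < k+1). Equivalently, in polynomial form, A_n^{(k)}(x) = x^{k+1} P_n^{(k)}(x), where P_n^{(k)}(x) (resp. A_n^{(k)}(x)) is the generating polynomial by rank of the minimal (resp. maximal) elements of the fibers of cardinality k+2. -/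
/-!
Let `P` be a Dyck path whose last descent has length `ℓ`. The Dyck paths with parent `P` are
exactly the sons `son P j` with `j ≤ ℓ`, and inserting a peak at height `j` raises the area by
`2 * j + 1`. So the fiber over `P` has `ℓ + 1` elements, with unique bottom `son P 0` and unique
top `son P ℓ`. Tops and bottoms of fibers of cardinality `k + 2` are therefore both in bijection
with the paths `P` with `ℓ = k + 1`, and over a common `P` their areas differ by `2 * (k + 1)`.
-/

/-- A Dyck path is a list of steps in `{+1, -1}` whose partial sums (heights)
are all nonnegative and whose total sum is `0`. -/
def IsDyck (s : List ℤ) : Prop :=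
  (∀ x ∈ s, x = 1 ∨ x = -1) ∧ (∀ i : ℕ, 0 ≤ (s.take i).sum) ∧ s.sum = 0

/-- The area of a path: the sum of all heights `h_0, …, h_{length}`. -/
def area (s : List ℤ) : ℤ :=
  ∑ i ∈ Finset.range (s.length + 1), (s.take i).sum

/-- The length of the last descent, i.e. of the final maximal run of `-1` steps. -/
def lastDescentLen (s : List ℤ) : ℕ :=
  (s.reverse.takeWhile (fun x => x == (-1 : ℤ))).length

/-- The son of a path `s` at height `j`: insert a peak `+1, -1` immediately
after position `length - j`. -/
def son (s : List ℤ) (j : ℕ) : List ℤ :=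
  s.take (s.length - j) ++ [1, -1] ++ s.drop (s.length - j)

/-- The parent of a Dyck path: delete the two steps `s_p, s_{p+1}` where `p` is
the largest (1-indexed) position carrying a `+1` step (the last peak). -/
def parent (s : List ℤ) : List ℤ :=
  s.take (s.length - lastDescentLen s - 1) ++ s.drop (s.length - lastDescentLen s + 1)

/-- The fiber of the parent map containing `Q`: all Dyck paths of the same
length as `Q` with the same parent. -/
def fiber (Q : List ℤ) : Set (List ℤ) :=
  {R : List ℤ | IsDyck R ∧ R.length = Q.length ∧ parent R = parent Q}

theorem eq_replicate_neg_one_of_one_notMem {s : List ℤ} (hs : ∀ x ∈ s, x = 1 ∨ x = -1)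
    (h1 : 1 ∉ s) : s = List.replicate s.length (-1) :=
  List.eq_replicate_iff.2
    ⟨rfl, fun x hx => (hs x hx).resolve_left (ne_of_mem_of_not_mem hx h1)⟩

theorem lastDescentLen_append_one (u : List ℤ) (d : ℕ) :
    lastDescentLen (u ++ 1 :: List.replicate d (-1)) = d := by
  have hrev : (u ++ 1 :: List.replicate d (-1 : ℤ)).reverse =
      List.replicate d (-1) ++ 1 :: u.reverse := by simp
  rw [lastDescentLen, hrev, List.takeWhile_append_of_pos (by simp)]
  simp

theorem le_lastDescentLen_iff_suffix {s : List ℤ} {j : ℕ} :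
    j ≤ lastDescentLen s ↔ List.replicate j (-1) <:+ s := by
  constructor
  · intro hj
    have hdescent : s.rtakeWhile (· == -1) = List.replicate (lastDescentLen s) (-1) :=
      List.eq_replicate_iff.2 ⟨by simp [List.rtakeWhile, lastDescentLen],
        fun x hx => by simpa using List.mem_rtakeWhile_imp hx⟩
    have hsuffix := List.rtakeWhile_suffix (· == -1) s
    rw [hdescent] at hsuffix
    exact (List.suffix_replicate_iff.2 ⟨by simpa using hj, by simp⟩).trans hsuffix
  · rintro ⟨a, rfl⟩
    rw [lastDescentLen, List.reverse_append, List.reverse_replicate,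
      List.takeWhile_append_of_pos (by simp)]
    simp

/-- The height before the last up step is nonnegative, so a down step must follow it. -/
theorem IsDyck.exists_last_peak {Q : List ℤ} (hQ : IsDyck Q) (hne : Q ≠ []) :
    ∃ u d, Q = u ++ 1 :: List.replicate (d + 1) (-1) := by
  obtain ⟨hsteps, hnonneg, hsum⟩ := hQ
  have hup : 1 ∈ Q := by
    by_contra h1
    rw [eq_replicate_neg_one_of_one_notMem hsteps h1] at hsum
    exact hne (by simpa using hsum)
  obtain ⟨v, u, hrev, hv⟩ := List.eq_append_cons_of_mem (List.mem_reverse.2 hup)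
  obtain rfl : Q = u.reverse ++ 1 :: v.reverse := by simpa using congrArg List.reverse hrev
  have hdescent := eq_replicate_neg_one_of_one_notMem (s := v.reverse)
    (fun x hx => hsteps x (by simp [List.mem_reverse.1 hx])) (by simpa using hv)
  rw [hdescent] at hsum ⊢
  have hheight : 0 ≤ u.reverse.sum := by simpa using hnonneg u.reverse.length
  have hpos : 0 < v.reverse.length := by
    simp only [List.sum_append, List.sum_cons, List.sum_replicate, nsmul_eq_mul] at hsum
    omega
  exact ⟨u.reverse, v.reverse.length - 1, by rw [Nat.sub_add_cancel hpos]⟩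

theorem parent_append (a : List ℤ) (d : ℕ) :
    parent (a ++ 1 :: List.replicate (d + 1) (-1)) = a ++ List.replicate d (-1) := by
  have hlen : (a ++ 1 :: List.replicate (d + 1) (-1 : ℤ)).length = a.length + 1 + (d + 1) := by
    simp only [List.length_append, List.length_cons, List.length_replicate]
    omega
  rw [parent, lastDescentLen_append_one, hlen, Nat.add_sub_cancel, Nat.add_sub_cancel,
    List.take_left, add_assoc, List.drop_length_add_append]
  simp [List.replicate_succ]

theorem son_append (a : List ℤ) (j : ℕ) :
    son (a ++ List.replicate j (-1)) j = a ++ 1 :: List.replicate (j + 1) (-1) := by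
  simp [son, List.replicate_succ]

theorem forall_height_append_nonneg_iff (a b : List ℤ) :
    (∀ i, 0 ≤ ((a ++ b).take i).sum) ↔
      (∀ i, 0 ≤ (a.take i).sum) ∧ ∀ i, 0 ≤ a.sum + (b.take i).sum := by
  constructor
  · refine fun h => ⟨fun i => ?_, fun i => ?_⟩
    · rw [List.take_eq_take_min, ← List.take_append_of_le_length (min_le_right i a.length)]
      exact h _
    · simpa only [List.take_length_add_append, List.sum_append] using h (a.length + i)
  · rintro ⟨ha, hb⟩ i
    rcases le_total i a.length with hi | hi
    · rw [List.take_append_of_le_length hi]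
      exact ha i
    · obtain ⟨m, rfl⟩ := Nat.exists_eq_add_of_le hi
      rw [List.take_length_add_append, List.sum_append]
      exact hb m

theorem forall_height_peak_cons_nonneg_iff (h : ℤ) (b : List ℤ) :
    (∀ i, 0 ≤ h + ((1 :: -1 :: b).take i).sum) ↔ ∀ i, 0 ≤ h + (b.take i).sum := by
  refine ⟨fun H i => by simpa using H (i + 2), fun H i => ?_⟩
  have hstart : 0 ≤ h := by simpa using H 0
  match i with
  | 0 => simpa using hstart
  | 1 => simpa using by omega
  | i + 2 => simpa using H i

theorem isDyck_insert_peak_iff (a b : List ℤ) :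
    IsDyck (a ++ 1 :: -1 :: b) ↔ IsDyck (a ++ b) := by
  rw [IsDyck, IsDyck, forall_height_append_nonneg_iff, forall_height_append_nonneg_iff,
    forall_height_peak_cons_nonneg_iff]
  simp [or_imp, forall_and]

theorem area_append (a b : List ℤ) :
    area (a ++ b) = area a + b.length * a.sum + area b := by
  have hleft : ∀ i ∈ Finset.range (a.length + 1), ((a ++ b).take i).sum = (a.take i).sum :=
    fun i hi => by rw [List.take_append_of_le_length (Finset.mem_range_succ_iff.1 hi)]
  have hright : ∀ i ∈ Finset.range b.length,
      ((a ++ b).take (a.length + 1 + i)).sum = a.sum + (b.take (i + 1)).sum := fun i _ => by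
    rw [add_assoc, add_comm 1 i, List.take_length_add_append, List.sum_append]
  rw [area, area, area, List.length_append, Nat.add_right_comm, Finset.sum_range_add,
    Finset.sum_congr rfl hleft, Finset.sum_congr rfl hright, Finset.sum_add_distrib,
    Finset.sum_range_succ' (fun i => (b.take i).sum)]
  simp [add_assoc]

theorem area_insert_peak (a b : List ℤ) :
    area (a ++ 1 :: -1 :: b) = area (a ++ b) + 2 * a.sum + 1 := by
  have hpeak : area [1, -1] = 1 := by decide
  rw [show a ++ 1 :: -1 :: b = a ++ ([1, -1] ++ b) from rfl, area_append, area_append [1, -1],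
    area_append a b, hpeak]
  simp only [List.cons_append, List.nil_append, List.length_cons, List.sum_cons, List.sum_nil,
    Nat.cast_add, Nat.cast_one]
  ring

section Sons

variable {P Q : List ℤ} {j : ℕ}

theorem length_son (P : List ℤ) (j : ℕ) : (son P j).length = P.length + 2 := by
  simp only [son, List.length_append, List.length_take, List.length_drop, List.length_cons,
    List.length_nil]
  omega

theorem isDyck_son_iff : IsDyck (son P j) ↔ IsDyck P := by
  simp [son, isDyck_insert_peak_iff]

theorem parent_son (hj : j ≤ lastDescentLen P) : parent (son P j) = P := by
  obtain ⟨a, rfl⟩ := le_lastDescentLen_iff_suffix.1 hj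
  rw [son_append, parent_append]

theorem injOn_son (j : ℕ) : Set.InjOn (son · j) {P | j ≤ lastDescentLen P} :=
  Set.LeftInvOn.injOn (f₁' := parent) fun _ => parent_son

theorem area_son (hP : P.sum = 0) (hj : j ≤ lastDescentLen P) :
    area (son P j) = area P + 2 * j + 1 := by
  obtain ⟨a, rfl⟩ := le_lastDescentLen_iff_suffix.1 hj
  have hheight : a.sum = j := by simpa [add_neg_eq_zero] using hP
  rw [son_append, List.replicate_succ, area_insert_peak, hheight]

theorem IsDyck.exists_eq_son (hQ : IsDyck Q) (hne : Q ≠ []) :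
    ∃ P j, IsDyck P ∧ j ≤ lastDescentLen P ∧ Q = son P j := by
  obtain ⟨u, d, rfl⟩ := hQ.exists_last_peak hne
  rw [← son_append] at hQ ⊢
  exact ⟨_, d, isDyck_son_iff.1 hQ, le_lastDescentLen_iff_suffix.2 ⟨u, rfl⟩, rfl⟩

theorem fiber_son (hP : IsDyck P) (hj : j ≤ lastDescentLen P) :
    fiber (son P j) = son P '' Set.Iic (lastDescentLen P) := by
  ext R
  constructor
  · rintro ⟨hR, hlen, hparent⟩
    have hne : R ≠ [] := List.ne_nil_of_length_eq_add_one (hlen.trans (length_son P j))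
    obtain ⟨P', j', -, hj', rfl⟩ := hR.exists_eq_son hne
    obtain rfl : P' = P := by rwa [parent_son hj', parent_son hj] at hparent
    exact ⟨j', hj', rfl⟩
  · rintro ⟨j', hj', rfl⟩
    exact ⟨isDyck_son_iff.2 hP, by rw [length_son, length_son], by
      rw [parent_son hj', parent_son hj]⟩

theorem natCard_fiber_son (hP : IsDyck P) (hj : j ≤ lastDescentLen P) :
    Nat.card (fiber (son P j)) = lastDescentLen P + 1 := by
  have hinj : Set.InjOn (son P) (Set.Iic (lastDescentLen P)) := by
    intro i hi i' hi' h
    have harea := congrArg area h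
    rw [area_son hP.2.2 hi, area_son hP.2.2 hi'] at harea
    omega
  rw [fiber_son hP hj, Nat.card_image_of_injOn hinj]
  simp

theorem son_top_iff (hP : IsDyck P) (hj : j ≤ lastDescentLen P) :
    (∀ R ∈ fiber (son P j), area R ≤ area (son P j)) ↔ j = lastDescentLen P := by
  rw [fiber_son hP hj, Set.forall_mem_image]
  constructor
  · intro htop
    have hle := htop (Set.mem_Iic.2 le_rfl)
    rw [area_son hP.2.2 le_rfl, area_son hP.2.2 hj] at hle
    omega
  · rintro rfl i hi
    rw [Set.mem_Iic] at hi
    rw [area_son hP.2.2 hi, area_son hP.2.2 le_rfl]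
    omega

theorem son_bottom_iff (hP : IsDyck P) (hj : j ≤ lastDescentLen P) :
    (∀ R ∈ fiber (son P j), area (son P j) ≤ area R) ↔ j = 0 := by
  rw [fiber_son hP hj, Set.forall_mem_image]
  constructor
  · intro hbottom
    have hle := hbottom (Set.mem_Iic.2 (Nat.zero_le _))
    rw [area_son hP.2.2 (Nat.zero_le _), area_son hP.2.2 hj] at hle
    omega
  · rintro rfl i hi
    rw [area_son hP.2.2 hi, area_son hP.2.2 hj]
    omega

end Sons

/-- The Dyck paths of semilength `m` and area `a` whose last descent has length `ℓ`. They serve as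
the parents of the fibers of cardinality `ℓ + 1` in semilength `m + 1`. -/
def dyckPathsWithLastDescent (m ℓ : ℕ) (a : ℤ) : Set (List ℤ) :=
  {P | IsDyck P ∧ P.length = 2 * m ∧ lastDescentLen P = ℓ ∧ area P = a}

/-- Tops of fibers are the case `j = ℓ`, bottoms the case `j = 0`. -/
theorem image_son_dyckPathsWithLastDescent {ℓ j : ℕ} (hj : j ≤ ℓ) (m : ℕ) (a : ℤ)
    {p : List ℤ → Prop}
    (hp : ∀ P, IsDyck P → lastDescentLen P = ℓ → ∀ i ≤ ℓ, (p (son P i) ↔ i = j)) :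
    (son · j) '' dyckPathsWithLastDescent m ℓ (a - (2 * j + 1)) =
      {Q | IsDyck Q ∧ Q.length = 2 * (m + 1) ∧ Nat.card (fiber Q) = ℓ + 1 ∧ p Q ∧ area Q = a} := by
  ext Q
  constructor
  · rintro ⟨P, ⟨hP, hlen, rfl, harea⟩, rfl⟩
    exact ⟨isDyck_son_iff.2 hP, by rw [length_son, hlen, mul_add_one],
      natCard_fiber_son hP hj, (hp P hP rfl j hj).2 rfl, by rw [area_son hP.2.2 hj]; omega⟩
  · rintro ⟨hQ, hlen, hcard, hpQ, harea⟩
    have hne : Q ≠ [] := List.ne_nil_of_length_eq_add_one hlen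
    obtain ⟨P, i, hP, hi, rfl⟩ := hQ.exists_eq_son hne
    obtain rfl : lastDescentLen P = ℓ := by simpa [natCard_fiber_son hP hi] using hcard
    obtain rfl : i = j := (hp P hP rfl i hi).1 hpQ
    rw [length_son] at hlen
    rw [area_son hP.2.2 hi] at harea
    exact ⟨P, ⟨hP, by omega, rfl, by omega⟩, rfl⟩

theorem natCard_selected_sons {ℓ j : ℕ} (hj : j ≤ ℓ) (m : ℕ) (a : ℤ) {p : List ℤ → Prop}
    (hp : ∀ P, IsDyck P → lastDescentLen P = ℓ → ∀ i ≤ ℓ, (p (son P i) ↔ i = j)) :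
    Nat.card {Q : List ℤ // IsDyck Q ∧ Q.length = 2 * (m + 1) ∧ Nat.card (fiber Q) = ℓ + 1 ∧
        p Q ∧ area Q = a} =
      Nat.card (dyckPathsWithLastDescent m ℓ (a - (2 * j + 1))) := by
  have hinj : Set.InjOn (son · j) (dyckPathsWithLastDescent m ℓ (a - (2 * j + 1))) :=
    (injOn_son j).mono fun P hP => hj.trans_eq hP.2.2.1.symm
  rw [← Nat.card_image_of_injOn hinj, image_son_dyckPathsWithLastDescent hj m a hp]
  rfl

/-- For `n ≥ 2`, `0 ≤ k ≤ n − 2` and `i ∈ ℕ`: the number of Dyck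
paths of semilength `n` of rank `i` (i.e. area `n + 2i`) that are the top (maximal
rank element) of a fiber of cardinality `k + 2` of the parent map equals the number
of Dyck paths of semilength `n` of rank `i − k − 1` that are the bottom (minimal rank
element) of a fiber of cardinality `k + 2` (this count being `0` when `i < k + 1`).
Equivalently, `A_n^{(k)}(x) = x^{k+1} · P_n^{(k)}(x)`. -/
theorem fiber_tops_eq_fiber_bottoms_shifted (n k i : ℕ) (hn : 2 ≤ n) (hk : k ≤ n - 2) :
    Nat.card {Q : List ℤ // IsDyck Q ∧ Q.length = 2 * n ∧
        Nat.card (fiber Q) = k + 2 ∧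
        (∀ R ∈ fiber Q, area R ≤ area Q) ∧
        area Q = (n : ℤ) + 2 * i} =
    Nat.card {Q : List ℤ // IsDyck Q ∧ Q.length = 2 * n ∧
        Nat.card (fiber Q) = k + 2 ∧
        (∀ R ∈ fiber Q, area Q ≤ area R) ∧
        area Q = (n : ℤ) + 2 * ((i : ℤ) - (k : ℤ) - 1)} := by
  obtain ⟨m, rfl⟩ : ∃ m, n = m + 1 := ⟨n - 1, by omega⟩
  have htop : ∀ P, IsDyck P → lastDescentLen P = k + 1 → ∀ j ≤ k + 1,
      ((∀ R ∈ fiber (son P j), area R ≤ area (son P j)) ↔ j = k + 1) :=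
    fun P hP hℓ j hj => hℓ ▸ son_top_iff hP (hℓ ▸ hj)
  have hbottom : ∀ P, IsDyck P → lastDescentLen P = k + 1 → ∀ j ≤ k + 1,
      ((∀ R ∈ fiber (son P j), area (son P j) ≤ area R) ↔ j = 0) :=
    fun P hP hℓ j hj => son_bottom_iff hP (hℓ ▸ hj)
  calc
    _ = Nat.card (dyckPathsWithLastDescent m (k + 1) _) :=
      natCard_selected_sons le_rfl m _ (p := fun Q => ∀ R ∈ fiber Q, area R ≤ area Q) htop
    _ = Nat.card (dyckPathsWithLastDescent m (k + 1) _) := by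
      congr 3
      push_cast
      ring
    _ = _ :=
      (natCard_selected_sons (Nat.zero_le _) m _
        (p := fun Q => ∀ R ∈ fiber Q, area Q ≤ area R) hbottom).symm
end

section
/- For all n ≥ 4 and 2 ≤ k ≤ n−2, the polynomials P_n^{(k)}(x) satisfy the recursion P_n^{(k)}(x) = x · ( P_n^{(k−1)}(x) − x^{k−1} · P_{n−1}^{(k−2)}(x) ). -/
/-- `endsUDkUD s k` says the final `k + 3` steps of `s` are
`+1`, followed by `k + 1` copies of `-1`, followed by `+1, -1`
(i.e. `s` ends with `U D^{k+1} U D`). -/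
def endsUDkUD (s : List ℤ) (k : ℕ) : Prop :=
  ∃ t : List ℤ, s = t ++ (1 :: (List.replicate (k + 1) (-1) ++ [1, -1]))

/-- The polynomial `P_n^{(k)}(x) = Σ_P x^{rank P}`, the sum being over all Dyck
paths `P` of semilength `n` ending with `U D^{k+1} U D`; the coefficient of
`x^i` is the number of such paths of rank `i`, i.e. of area `n + 2i`
(all ranks are at most `n(n-1)/2 ≤ n²`, so the range below is exhaustive). -/
noncomputable def Pnk (n k : ℕ) : Polynomial ℤ :=
  ∑ i ∈ Finset.range (n * n + 1),
    Polynomial.C ((Nat.card {P : List ℤ // IsDyck P ∧ P.length = 2 * n ∧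
      endsUDkUD P k ∧ area P = (n : ℤ) + 2 * i}) : ℤ) * Polynomial.X ^ i

theorem finite_setOf_list_forall_mem_length_eq {α : Type*} {S : Set α} (hS : S.Finite) (m : ℕ) :
    {s : List α | (∀ x ∈ s, x ∈ S) ∧ s.length = m}.Finite := by
  have : Finite S := hS
  refine ((List.finite_length_eq S m).image (List.map (↑))).subset ?_
  rintro s ⟨hmem, hlen⟩
  lift s to List S using hmem
  exact ⟨s, by simpa using hlen, rfl⟩

theorem sum_pow_comp_eq_sum_card_mul_pow {ι R : Type*} [Semiring R] (s : Finset ι) (f : ι → ℕ)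
    (x : R) {N : ℕ} (hf : ∀ a ∈ s, f a < N) :
    ∑ a ∈ s, x ^ f a = ∑ i ∈ Finset.range N, ((s.filter (f · = i)).card : R) * x ^ i := by
  rw [← Finset.sum_fiberwise_of_maps_to' (fun a ha => Finset.mem_range.2 (hf a ha)) (x ^ ·)]
  simp only [Finset.sum_const, nsmul_eq_mul]

theorem disjoint_image_append_singleton {α : Type*} {x y : α} (hxy : x ≠ y) (A B : Set (List α)) :
    Disjoint ((· ++ [x]) '' A) ((· ++ [y]) '' B) := by
  rw [Set.disjoint_left]
  rintro _ ⟨t, -, rfl⟩ ⟨u, -, hu⟩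
  exact hxy (List.append_singleton_inj.1 hu).2.symm

/-! ### Area of lattice paths -/

theorem area_append_s8 (s t : List ℤ) : area (s ++ t) = area s + t.length * s.sum + area t := by
  have split : ∀ i ∈ Finset.range (s.length + 1), ((s ++ t).take i).sum = (s.take i).sum := by
    intro i hi
    rw [List.take_append_of_le_length (Finset.mem_range_succ_iff.1 hi)]
  unfold area
  rw [List.length_append, Nat.add_right_comm, Finset.sum_range_add, Finset.sum_congr rfl split,
    add_assoc, Finset.sum_range_succ' _ t.length]
  simp only [add_assoc, add_comm 1, List.take_length_add_append, List.sum_append,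
    Finset.sum_add_distrib, Finset.sum_const, Finset.card_range, nsmul_eq_mul, List.take_zero,
    List.sum_nil, add_zero]

theorem area_singleton (x : ℤ) : area [x] = x := by
  simp [area, Finset.sum_range_succ]

theorem two_mul_area_replicate (j : ℕ) (x : ℤ) :
    2 * area (List.replicate j x) = j * (j + 1) * x := by
  induction j with
  | zero => simp [area]
  | succ j ih =>
    rw [List.replicate_succ', area_append_s8, area_singleton, mul_add, mul_add, ih, List.sum_replicate,
      List.length_singleton, nsmul_eq_mul]
    push_cast
    ring

theorem even_sum_sub_length {s : List ℤ} (hs : ∀ x ∈ s, Odd x) : Even (s.sum - s.length) := by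
  induction s with
  | nil => simp
  | cons x s ih =>
    obtain ⟨hx, hs⟩ := List.forall_mem_cons.1 hs
    have regroup : (x :: s).sum - (x :: s).length = (x - 1) + (s.sum - s.length) := by
      rw [List.sum_cons, List.length_cons]
      push_cast
      ring
    rw [regroup]
    exact (hx.sub_odd odd_one).add (ih hs)

theorem two_mul_area_le {s : List ℤ} (hs : ∀ x ∈ s, x ≤ 1) :
    2 * area s ≤ s.length * (s.length + 1) := by
  have height_le : ∀ i ∈ Finset.range (s.length + 1), (s.take i).sum ≤ (i : ℤ) := by
    intro i hi
    have := List.sum_le_card_nsmul (s.take i) 1 fun x hx => hs x (List.mem_of_mem_take hx)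
    rwa [List.length_take_of_le (Finset.mem_range_succ_iff.1 hi), nsmul_one] at this
  have gauss := Finset.sum_range_id_mul_two (s.length + 1)
  rw [Nat.add_sub_cancel] at gauss
  zify at gauss
  unfold area
  linarith [Finset.sum_le_sum height_le]

/-! ### Nonnegative walks -/

/-- A nonnegative walk: a prefix of a Dyck path, i.e. a list of steps `±1` whose partial sums are
all nonnegative, with arbitrary final height. -/
def NonnegWalk (s : List ℤ) : Prop :=
  (∀ x ∈ s, x = 1 ∨ x = -1) ∧ ∀ i : ℕ, 0 ≤ (s.take i).sum

theorem isDyck_iff_nonnegWalk {s : List ℤ} : IsDyck s ↔ NonnegWalk s ∧ s.sum = 0 :=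
  and_assoc.symm

theorem nonnegWalk_append {s t : List ℤ} :
    NonnegWalk (s ++ t) ↔
      NonnegWalk s ∧ (∀ x ∈ t, x = 1 ∨ x = -1) ∧ ∀ i : ℕ, 0 ≤ s.sum + (t.take i).sum := by
  have heights : (∀ i : ℕ, 0 ≤ ((s ++ t).take i).sum) ↔
      (∀ i : ℕ, 0 ≤ (s.take i).sum) ∧ ∀ i : ℕ, 0 ≤ s.sum + (t.take i).sum := by
    refine ⟨fun h => ⟨fun i => ?_, fun i => ?_⟩, fun ⟨hs, ht⟩ i => ?_⟩
    · simpa [List.take_append_of_le_length, ← List.take_eq_take_min] using h (min i s.length)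
    · simpa [List.take_length_add_append] using h (s.length + i)
    · rcases le_total i s.length with hi | hi
      · rw [List.take_append_of_le_length hi]
        exact hs i
      · obtain ⟨j, rfl⟩ := Nat.exists_eq_add_of_le hi
        rw [List.take_length_add_append, List.sum_append]
        exact ht j
  unfold NonnegWalk
  rw [List.forall_mem_append, heights]
  tauto

namespace NonnegWalk

variable {s : List ℤ}

theorem sum_nonneg (hs : NonnegWalk s) : 0 ≤ s.sum := by
  simpa using hs.2 s.length

theorem append_singleton_iff {x : ℤ} :
    NonnegWalk (s ++ [x]) ↔ NonnegWalk s ∧ (x = 1 ∨ x = -1) ∧ 0 ≤ s.sum + x := by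
  rw [nonnegWalk_append, List.forall_mem_singleton]
  refine and_congr_right fun hs => and_congr_right fun _ => ⟨fun h => by simpa using h 1, ?_⟩
  rintro h (_ | i)
  · simpa using hs.sum_nonneg
  · simpa using h

theorem append_replicate_neg_one_iff {j : ℕ} :
    NonnegWalk (s ++ List.replicate j (-1)) ↔ NonnegWalk s ∧ (j : ℤ) ≤ s.sum := by
  have steps : ∀ x ∈ List.replicate j (-1 : ℤ), x = 1 ∨ x = -1 :=
    fun x hx => Or.inr (List.eq_of_mem_replicate hx)
  rw [nonnegWalk_append, and_iff_right steps]
  simp only [List.take_replicate, List.sum_replicate, nsmul_eq_mul]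
  refine and_congr_right fun _ => ⟨fun h => ?_, fun h i => ?_⟩
  · have := h j
    rw [min_self] at this
    linarith
  · have : ((min i j : ℕ) : ℤ) ≤ j := by exact_mod_cast min_le_right i j
    linarith

/-- The height `h_i` has the parity of `i`, so `h_i = 2⌊h_i / 2⌋ + (i mod 2)` and
`r = Σ ⌊h_i / 2⌋`; the remainders count the odd positions. -/
theorem exists_area_eq (hs : NonnegWalk s) :
    ∃ r : ℕ, area s = ((s.length + 1) / 2 : ℕ) + 2 * r := by
  induction s using List.reverseRecOn with
  | nil => exact ⟨0, by simp [area]⟩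
  | append_singleton s x ih =>
    have parity : Even ((s ++ [x]).sum - (s ++ [x]).length) :=
      even_sum_sub_length fun y hy => by rcases hs.1 y hy with rfl | rfl <;> decide
    obtain ⟨hs, -, height_nonneg⟩ := append_singleton_iff.1 hs
    obtain ⟨r, hr⟩ := ih hs
    refine ⟨r + ((s.sum + x) / 2).toNat, ?_⟩
    rw [area_append_s8, area_singleton, hr]
    simp only [List.sum_append, List.sum_singleton, List.length_append, List.length_singleton,
      Int.even_iff] at parity ⊢
    omega

end NonnegWalk

/-! ### Rank -/

/-- The rank `(area - n) / 2` of a Dyck path of semilength `n`, where `n` is read off as half the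
length of the list. On other lists the value is meaningless. -/
def dyckRank (s : List ℤ) : ℕ :=
  ((area s - (s.length / 2 : ℕ)) / 2).toNat

section IsDyck

variable {P : List ℤ} {n : ℕ}

theorem area_eq_add_two_mul_dyckRank (hP : IsDyck P) (hn : P.length = 2 * n) :
    area P = n + 2 * dyckRank P := by
  obtain ⟨r, hr⟩ := (isDyck_iff_nonnegWalk.1 hP).1.exists_area_eq
  unfold dyckRank
  omega

theorem area_eq_iff_dyckRank_eq (hP : IsDyck P) (hn : P.length = 2 * n) {i : ℕ} :
    area P = n + 2 * i ↔ dyckRank P = i := by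
  rw [area_eq_add_two_mul_dyckRank hP hn]
  omega

theorem dyckRank_le (hP : IsDyck P) (hn : P.length = 2 * n) : dyckRank P ≤ n * n := by
  have area_le := two_mul_area_le (s := P) fun x hx => by rcases hP.1 x hx with rfl | rfl <;> simp
  rw [area_eq_add_two_mul_dyckRank hP hn, hn] at area_le
  zify
  push_cast at area_le
  linarith

end IsDyck

/-! ### Paths ending in `U D^{k+1} U D` -/

/-- The Dyck paths of semilength `n` ending with `U D^{k+1} U D`, over which the sum defining
`P_n^{(k)}` runs. -/
def dyckPathsUDkUD (n k : ℕ) : Set (List ℤ) :=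
  {P | IsDyck P ∧ P.length = 2 * n ∧ endsUDkUD P k}

theorem finite_dyckPathsUDkUD (n k : ℕ) : (dyckPathsUDkUD n k).Finite :=
  (finite_setOf_list_forall_mem_length_eq (Set.toFinite {1, -1}) (2 * n)).subset
    fun _ hP => ⟨hP.1.1, hP.2.1⟩

theorem Pnk_eq_finsum_dyckPathsUDkUD (n k : ℕ) :
    Pnk n k = ∑ᶠ P ∈ dyckPathsUDkUD n k, Polynomial.X ^ dyckRank P := by
  have rank_lt : ∀ P ∈ (finite_dyckPathsUDkUD n k).toFinset, dyckRank P < n * n + 1 := by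
    intro P hP
    obtain ⟨hP, hlen, -⟩ := (Set.Finite.mem_toFinset _).1 hP
    exact Nat.lt_succ_of_le (dyckRank_le hP hlen)
  rw [finsum_mem_eq_finite_toFinset_sum _ (finite_dyckPathsUDkUD n k),
    sum_pow_comp_eq_sum_card_mul_pow _ _ _ rank_lt]
  refine Finset.sum_congr rfl fun i _ => ?_
  rw [map_natCast, Nat.subtype_card _ fun P => ?_]
  rw [Finset.mem_filter, Set.Finite.mem_toFinset]
  constructor
  · rintro ⟨⟨hP, hlen, hends⟩, hrank⟩
    exact ⟨hP, hlen, hends, (area_eq_iff_dyckRank_eq hP hlen).2 hrank⟩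
  · rintro ⟨hP, hlen, hends, harea⟩
    exact ⟨⟨hP, hlen, hends⟩, (area_eq_iff_dyckRank_eq hP hlen).1 harea⟩

/-- The tail `U D^{k+1} U D`. -/
def tailUDkUD (k : ℕ) : List ℤ :=
  1 :: (List.replicate (k + 1) (-1) ++ [1, -1])

theorem tailUDkUD_eq_append (k : ℕ) :
    tailUDkUD k = [1] ++ List.replicate (k + 1) (-1) ++ [1] ++ [-1] := by
  simp [tailUDkUD]

theorem length_tailUDkUD (k : ℕ) : (tailUDkUD k).length = k + 4 := by
  simp [tailUDkUD]

theorem isDyck_append_tailUDkUD {t : List ℤ} {k : ℕ} :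
    IsDyck (t ++ tailUDkUD k) ↔ NonnegWalk t ∧ t.sum = k := by
  simp only [isDyck_iff_nonnegWalk, tailUDkUD_eq_append, ← List.append_assoc,
    NonnegWalk.append_singleton_iff, NonnegWalk.append_replicate_neg_one_iff, List.sum_append,
    List.sum_replicate, List.sum_singleton, nsmul_eq_mul]
  grind

theorem two_mul_area_append_tailUDkUD {t : List ℤ} {k : ℕ} (ht : t.sum = k) :
    2 * area (t ++ tailUDkUD k) = 2 * area t + (k + 1) * (k + 2) + 2 := by
  have descent := two_mul_area_replicate (k + 1) (-1)
  simp only [tailUDkUD_eq_append, ← List.append_assoc, area_append_s8, area_singleton, ht,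
    List.sum_append, List.sum_replicate, List.sum_singleton, nsmul_eq_mul,
    List.length_replicate, List.length_singleton]
  push_cast at descent ⊢
  linarith

/-- The walks left after deleting the tail `U D^{k+1} U D` from the paths in `dyckPathsUDkUD n k`.
The length `2n - k - 4` is expressed without subtraction, so that the set is empty when this number
is negative. -/
def prefixesUDkUD (n k : ℕ) : Set (List ℤ) :=
  {t | NonnegWalk t ∧ t.sum = k ∧ t.length + k + 4 = 2 * n}

section prefixesUDkUD

variable {n k : ℕ} {t : List ℤ}

theorem append_tailUDkUD_mem_iff :
    t ++ tailUDkUD k ∈ dyckPathsUDkUD n k ↔ t ∈ prefixesUDkUD n k := by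
  have ends : endsUDkUD (t ++ tailUDkUD k) k := ⟨t, rfl⟩
  simp only [dyckPathsUDkUD, prefixesUDkUD, Set.mem_ofPred_eq, isDyck_append_tailUDkUD, ends,
    List.length_append, length_tailUDkUD, and_true, and_assoc, add_assoc]

theorem dyckPathsUDkUD_eq_image (n k : ℕ) :
    dyckPathsUDkUD n k = (· ++ tailUDkUD k) '' prefixesUDkUD n k := by
  ext P
  constructor
  · intro hP
    obtain ⟨t, rfl⟩ := hP.2.2
    exact ⟨t, append_tailUDkUD_mem_iff.1 hP, rfl⟩
  · rintro ⟨t, ht, rfl⟩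
    exact append_tailUDkUD_mem_iff.2 ht

theorem finite_prefixesUDkUD (n k : ℕ) : (prefixesUDkUD n k).Finite := by
  refine Set.Finite.of_finite_image ?_ (List.append_left_injective (tailUDkUD k)).injOn
  rw [← dyckPathsUDkUD_eq_image]
  exact finite_dyckPathsUDkUD n k

theorem Pnk_eq_finsum_prefixesUDkUD (n k : ℕ) :
    Pnk n k = ∑ᶠ t ∈ prefixesUDkUD n k, Polynomial.X ^ dyckRank (t ++ tailUDkUD k) := by
  rw [Pnk_eq_finsum_dyckPathsUDkUD, dyckPathsUDkUD_eq_image,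
    finsum_mem_image (List.append_left_injective _).injOn]

theorem four_mul_dyckRank_append_tailUDkUD (ht : t ∈ prefixesUDkUD n k) :
    4 * (dyckRank (t ++ tailUDkUD k) : ℤ) = 2 * area t + (k + 1) * (k + 2) + 2 - 2 * n := by
  obtain ⟨hP, hlen, -⟩ := append_tailUDkUD_mem_iff.2 ht
  linarith [area_eq_add_two_mul_dyckRank hP hlen, two_mul_area_append_tailUDkUD ht.2.1]

theorem append_neg_one_mem_prefixesUDkUD_iff :
    t ++ [-1] ∈ prefixesUDkUD n k ↔ t ∈ prefixesUDkUD n (k + 1) := by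
  simp only [prefixesUDkUD, Set.mem_ofPred_eq, NonnegWalk.append_singleton_iff, List.sum_append,
    List.sum_singleton, List.length_append, List.length_singleton]
  grind

theorem append_one_mem_prefixesUDkUD_iff :
    t ++ [1] ∈ prefixesUDkUD (n + 1) (k + 1) ↔ t ∈ prefixesUDkUD n k := by
  simp only [prefixesUDkUD, Set.mem_ofPred_eq, NonnegWalk.append_singleton_iff, List.sum_append,
    List.sum_singleton, List.length_append, List.length_singleton]
  grind

theorem prefixesUDkUD_succ_succ (n k : ℕ) :
    prefixesUDkUD (n + 1) (k + 1) =
      (· ++ [-1]) '' prefixesUDkUD (n + 1) (k + 2) ∪ (· ++ [1]) '' prefixesUDkUD n k := by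
  ext s
  constructor
  · intro hs
    rcases List.eq_nil_or_concat' s with rfl | ⟨t, x, rfl⟩
    · have : (0 : ℤ) = (k + 1 : ℕ) := hs.2.1
      omega
    · rcases (NonnegWalk.append_singleton_iff.1 hs.1).2.1 with rfl | rfl
      · exact Or.inr ⟨t, append_one_mem_prefixesUDkUD_iff.1 hs, rfl⟩
      · exact Or.inl ⟨t, append_neg_one_mem_prefixesUDkUD_iff.1 hs, rfl⟩
  · rintro (⟨t, ht, rfl⟩ | ⟨t, ht, rfl⟩)
    · exact append_neg_one_mem_prefixesUDkUD_iff.2 ht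
    · exact append_one_mem_prefixesUDkUD_iff.2 ht

theorem dyckRank_append_neg_one_append_tailUDkUD (ht : t ∈ prefixesUDkUD n (k + 1)) :
    dyckRank (t ++ [-1] ++ tailUDkUD k) + 1 = dyckRank (t ++ tailUDkUD (k + 1)) := by
  have shorter := four_mul_dyckRank_append_tailUDkUD ht
  have longer :=
    four_mul_dyckRank_append_tailUDkUD (append_neg_one_mem_prefixesUDkUD_iff.2 ht)
  rw [area_append_s8, area_singleton, ht.2.1] at longer
  simp only [List.length_singleton] at longer
  zify
  push_cast at shorter longer
  linarith

theorem dyckRank_append_one_append_tailUDkUD (ht : t ∈ prefixesUDkUD n k) :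
    dyckRank (t ++ [1] ++ tailUDkUD (k + 1)) = dyckRank (t ++ tailUDkUD k) + (k + 1) := by
  have shorter := four_mul_dyckRank_append_tailUDkUD ht
  have longer := four_mul_dyckRank_append_tailUDkUD (append_one_mem_prefixesUDkUD_iff.2 ht)
  rw [area_append_s8, area_singleton, ht.2.1] at longer
  simp only [List.length_singleton] at longer
  zify
  push_cast at shorter longer
  linarith

end prefixesUDkUD

theorem X_mul_Pnk_succ_succ (n k : ℕ) :
    Polynomial.X * Pnk (n + 1) (k + 1) =
      Pnk (n + 1) (k + 2) + Polynomial.X ^ (k + 2) * Pnk n k := by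
  rw [Pnk_eq_finsum_prefixesUDkUD (n + 1) (k + 1), prefixesUDkUD_succ_succ,
    finsum_mem_union (disjoint_image_append_singleton (by decide) _ _)
      ((finite_prefixesUDkUD _ _).image _) ((finite_prefixesUDkUD _ _).image _),
    finsum_mem_image (List.append_left_injective _).injOn,
    finsum_mem_image (List.append_left_injective _).injOn, mul_add,
    Pnk_eq_finsum_prefixesUDkUD (n + 1), Pnk_eq_finsum_prefixesUDkUD n,
    mul_finsum_mem, mul_finsum_mem, mul_finsum_mem]
  congr 1 <;> refine finsum_mem_congr rfl fun t ht => ?_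
  · rw [← pow_succ', dyckRank_append_neg_one_append_tailUDkUD ht]
  · rw [← pow_succ', ← pow_add, dyckRank_append_one_append_tailUDkUD ht]
    congr 1
    ring

theorem Pnk_recursion_general (n k : ℕ) :
    Pnk (n + 1) (k + 2) =
      Polynomial.X * (Pnk (n + 1) (k + 1) - Polynomial.X ^ (k + 1) * Pnk n k) := by
  rw [mul_sub, X_mul_Pnk_succ_succ]
  ring

/-- For `n ≥ 4` and `2 ≤ k ≤ n − 2`,
`P_n^{(k)}(x) = x · (P_n^{(k−1)}(x) − x^{k−1} · P_{n−1}^{(k−2)}(x))`. -/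
theorem Pnk_recursion (n k : ℕ) (hn : 4 ≤ n) (hk2 : 2 ≤ k) (hk : k ≤ n - 2) :
    Pnk n k =
      Polynomial.X * (Pnk n (k - 1) - Polynomial.X ^ (k - 1) * Pnk (n - 1) (k - 2)) := by
  obtain ⟨k, rfl⟩ := Nat.exists_eq_add_of_le' hk2
  obtain ⟨n, rfl⟩ := Nat.exists_eq_add_of_le' (by omega : 1 ≤ n)
  exact Pnk_recursion_general n k
end

section
/- For all n ≥ 3, let a_k denote the number of Dyck paths of semilength n having area n + 2k, and let K = n(n−1)/2. Then a_K = 1, a_{K−1} = 1, and a_{K−2} = 2; consequently a_{K−1}^2 < a_{K−2} · a_K, so the sequence (a_0, a_1, …, a_K) is not log-concave. -/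
/-- `a n k`: the number of Dyck paths of semilength `n` having area `n + 2k`. -/
noncomputable def dyckAreaCount (n k : ℕ) : ℕ :=
  Nat.card {P : List ℤ // IsDyck P ∧ P.length = 2 * n ∧ area P = (n : ℤ) + 2 * k}

/-- The words in the steps `1` and `-1`, as an inductive predicate so that proofs can recurse on the
first step. -/
inductive IsStepWord : List ℤ → Prop
  | nil : IsStepWord []
  | up {t : List ℤ} (ht : IsStepWord t) : IsStepWord (1 :: t)
  | down {t : List ℤ} (ht : IsStepWord t) : IsStepWord (-1 :: t)

lemma isStepWord_iff_forall_mem {s : List ℤ} : IsStepWord s ↔ ∀ x ∈ s, x = 1 ∨ x = -1 := by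
  constructor
  · intro hs
    induction hs with
    | nil => simp
    | up _ ih => simpa using ih
    | down _ ih => simpa using ih
  · intro hs
    induction s with
    | nil => exact .nil
    | cons x t ih =>
      obtain ⟨hx, ht⟩ := List.forall_mem_cons.mp hs
      rcases hx with rfl | rfl
      · exact .up (ih ht)
      · exact .down (ih ht)

/-- The partition cut out above a path: every down step contributes the number of up steps after
it. Zero parts are kept, so that the number of parts is the number of down steps. -/
def pathShape : List ℤ → Multiset ℕ
  | [] => 0
  | x :: t => if x = -1 then t.count 1 ::ₘ pathShape t else pathShape t

@[simp] lemma pathShape_nil : pathShape [] = 0 := rfl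

@[simp] lemma pathShape_up (t : List ℤ) : pathShape (1 :: t) = pathShape t := rfl

@[simp] lemma pathShape_down (t : List ℤ) : pathShape (-1 :: t) = t.count 1 ::ₘ pathShape t := rfl

lemma card_pathShape (s : List ℤ) : (pathShape s).card = s.count (-1) := by
  induction s with
  | nil => rfl
  | cons x t ih => by_cases hx : x = -1 <;> simp [pathShape, hx, ih]

lemma le_count_one_of_mem_pathShape {s : List ℤ} {a : ℕ} (ha : a ∈ pathShape s) :
    a ≤ s.count 1 := by
  induction s with
  | nil => simp at ha
  | cons x t ih =>
    have hcount : t.count 1 ≤ (x :: t).count 1 := List.count_le_count_cons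
    by_cases hx : x = -1
    · subst hx
      rcases Multiset.mem_cons.mp ha with rfl | ha
      · exact hcount
      · exact (ih ha).trans hcount
    · exact (ih (by simpa only [pathShape, if_neg hx] using ha)).trans hcount

lemma pathShape_append (u v : List ℤ) :
    pathShape (u ++ v) = (pathShape u).map (· + v.count 1) + pathShape v := by
  induction u with
  | nil => simp
  | cons x t ih => by_cases hx : x = -1 <;> simp [pathShape, hx, ih]

lemma count_mul_count_le_sum_pathShape_append (u v : List ℤ) :
    u.count (-1) * v.count 1 ≤ (pathShape (u ++ v)).sum := by
  rw [pathShape_append, Multiset.sum_add, Multiset.sum_map_add, Multiset.map_const',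
    Multiset.sum_replicate, card_pathShape, smul_eq_mul]
  omega

lemma area_cons (x : ℤ) (t : List ℤ) : area (x :: t) = x * (t.length + 1) + area t := by
  unfold area
  rw [List.length_cons, Finset.sum_range_succ']
  simp only [List.take_succ_cons, List.sum_cons, List.take_zero, List.sum_nil, add_zero,
    Finset.sum_add_distrib, Finset.sum_const, Finset.card_range, nsmul_eq_mul]
  push_cast
  ring

namespace IsStepWord

variable {s t : List ℤ}

lemma take (hs : IsStepWord s) (i : ℕ) : IsStepWord (s.take i) :=
  isStepWord_iff_forall_mem.mpr fun x hx =>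
    isStepWord_iff_forall_mem.mp hs x (List.mem_of_mem_take hx)

lemma length_eq (hs : IsStepWord s) : s.length = s.count 1 + s.count (-1) := by
  induction hs with
  | nil => rfl
  | up _ ih => simp [ih, add_right_comm]
  | down _ ih => simp [ih, add_assoc]

lemma sum_eq (hs : IsStepWord s) : s.sum = (s.count 1 : ℤ) - s.count (-1) := by
  induction hs with
  | nil => rfl
  | up _ ih =>
    rw [List.sum_cons, ih, List.count_cons_self, List.count_cons_of_ne (by decide)]
    push_cast
    ring
  | down _ ih =>
    rw [List.sum_cons, ih, List.count_cons_self, List.count_cons_of_ne (by decide)]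
    push_cast
    ring

lemma two_mul_area_add_four_mul_sum_pathShape (hs : IsStepWord s) :
    2 * area s + 4 * (pathShape s).sum = (s.count 1 : ℤ) * (s.count 1 + 1)
      + 2 * s.count 1 * s.count (-1) - s.count (-1) * (s.count (-1) + 1) := by
  induction hs with
  | nil => rfl
  | up ht ih =>
    rw [area_cons, ht.length_eq, pathShape_up, List.count_cons_self,
      List.count_cons_of_ne (by decide), Nat.cast_succ, Nat.cast_add]
    linarith
  | down ht ih =>
    rw [area_cons, ht.length_eq, pathShape_down, Multiset.sum_cons, List.count_cons_self,
      List.count_cons_of_ne (by decide), Nat.cast_succ, Nat.cast_add, Nat.cast_add]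
    linarith

lemma eq_of_pathShape_eq (hs : IsStepWord s) (ht : IsStepWord t) (hup : s.count 1 = t.count 1)
    (hshape : pathShape s = pathShape t) : s = t := by
  -- A word with `p` up steps begins with a down step exactly when `p` is one of its parts.
  have head_ne : ∀ u v : List ℤ, (1 :: u).count 1 = (-1 :: v).count 1 →
      pathShape (1 :: u) ≠ pathShape (-1 :: v) := by
    intro u v hcount hshape
    have hmem : v.count 1 ∈ pathShape u := by
      rw [← pathShape_up, hshape, pathShape_down]
      exact Multiset.mem_cons_self _ _
    have hle := le_count_one_of_mem_pathShape hmem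
    have hcount' : u.count 1 + 1 = v.count 1 := by simpa using hcount
    omega
  induction hs generalizing t with
  | nil => cases ht <;> simp_all
  | up _ ih =>
    cases ht with
    | nil => simp at hup
    | up ht => rw [ih ht (by simpa using hup) (by simpa using hshape)]
    | down => exact absurd hshape (head_ne _ _ hup)
  | @down u _ ih =>
    cases ht with
    | nil => simp at hshape
    | up => exact absurd hshape.symm (head_ne _ _ hup.symm)
    | @down v ht =>
      have hup' : u.count 1 = v.count 1 := by simpa using hup
      rw [ih ht hup' (by simpa [hup'] using hshape)]

lemma exists_pathShape_eq (p : ℕ) (M : Multiset ℕ) (hM : ∀ a ∈ M, a ≤ p) :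
    ∃ s, IsStepWord s ∧ s.count 1 = p ∧ pathShape s = M := by
  by_cases hp : p ∈ M
  · obtain ⟨N, rfl⟩ := Multiset.exists_cons_of_mem hp
    obtain ⟨t, ht, hup, rfl⟩ :=
      exists_pathShape_eq p N fun a ha => hM a (Multiset.mem_cons_of_mem ha)
    exact ⟨-1 :: t, .down ht, by simp [hup], by rw [pathShape_down, hup]⟩
  · have hlt : ∀ a ∈ M, a < p := fun a ha => (hM a ha).lt_of_ne (ne_of_mem_of_not_mem ha hp)
    cases p with
    | zero => exact ⟨[], .nil, rfl, (Multiset.eq_zero_of_forall_notMem fun a ha => by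
        simpa using hlt a ha).symm⟩
    | succ p =>
      obtain ⟨t, ht, hup, hshape⟩ :=
        exists_pathShape_eq p M fun a ha => Nat.lt_succ_iff.mp (hlt a ha)
      exact ⟨1 :: t, .up ht, by simp [hup], hshape⟩
termination_by p + M.card

lemma sum_take_nonneg (hs : IsStepWord s) (hcount : s.count (-1) ≤ s.count 1)
    (hshape : (pathShape s).sum < s.count 1) (i : ℕ) : 0 ≤ (s.take i).sum := by
  -- In a word with `n` up steps, a prefix with `k` up steps and more than `k` down steps would give
  -- at least `(k + 1) * (n - k) ≥ n` boxes.
  by_contra! hneg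
  rw [(hs.take i).sum_eq] at hneg
  have hbox := count_mul_count_le_sum_pathShape_append (s.take i) (s.drop i)
  rw [List.take_append_drop] at hbox
  have hup : s.count 1 = (s.take i).count 1 + (s.drop i).count 1 := by
    rw [← List.count_append, List.take_append_drop]
  have hdown : (s.take i).count (-1) ≤ s.count (-1) := (List.take_sublist i s).count_le _
  refine hshape.not_ge ?_
  calc s.count 1 = (s.take i).count 1 + (s.drop i).count 1 := hup
    _ ≤ ((s.take i).count 1 + 1) * (s.drop i).count 1 := by
      have hpos : 1 ≤ (s.drop i).count 1 := by omega
      rw [Nat.add_one_mul]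
      exact Nat.add_le_add_right (Nat.le_mul_of_pos_right _ hpos) _
    _ ≤ (s.take i).count (-1) * (s.drop i).count 1 := Nat.mul_le_mul_right _ (by omega)
    _ ≤ (pathShape s).sum := hbox

end IsStepWord

lemma filter_ne_add_replicate {α : Type*} [DecidableEq α] (M : Multiset α) (a : α) :
    M.filter (· ≠ a) + Multiset.replicate (M.card - (M.filter (· ≠ a)).card) a = M := by
  have hsplit := Multiset.filter_add_not (· ≠ a) M
  simp only [not_not, Multiset.filter_eq'] at hsplit
  have hcard := congrArg Multiset.card hsplit
  rw [Multiset.card_add, Multiset.card_replicate] at hcard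
  rw [← hcard, Nat.add_sub_cancel_left, hsplit]

lemma card_parts_le {j : ℕ} (π : j.Partition) : π.parts.card ≤ j := by
  simpa [π.parts_sum] using
    Multiset.card_nsmul_le_sum (s := π.parts) (a := 1) fun _ => π.parts_pos

/-- The words with `p` up steps and `q` down steps whose shape has size `j`. -/
def wordsOfShapeSize (p q j : ℕ) : Set (List ℤ) :=
  {s | IsStepWord s ∧ s.count 1 = p ∧ s.count (-1) = q ∧ (pathShape s).sum = j}

lemma card_wordsOfShapeSize {p q j : ℕ} (hp : j ≤ p) (hq : j ≤ q) :
    Nat.card (wordsOfShapeSize p q j) = Fintype.card j.Partition := by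
  let toPartition (s : wordsOfShapeSize p q j) : j.Partition :=
    .ofSums j (pathShape s) s.2.2.2.2
  rw [← Nat.card_eq_fintype_card]
  refine Nat.card_eq_of_bijective toPartition ⟨?_, ?_⟩
  · rintro ⟨s, hs, hsp, hsq, hsj⟩ ⟨t, ht, htp, htq, htj⟩ h
    have hparts : (pathShape s).filter (· ≠ 0) = (pathShape t).filter (· ≠ 0) :=
      congrArg Nat.Partition.parts h
    have hshape : pathShape s = pathShape t := by
      rw [← filter_ne_add_replicate (pathShape s) 0, ← filter_ne_add_replicate (pathShape t) 0,
        hparts, card_pathShape, card_pathShape, hsq, htq]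
    exact Subtype.ext (hs.eq_of_pathShape_eq ht (hsp.trans htp.symm) hshape)
  · intro π
    have hcard := card_parts_le π
    obtain ⟨s, hs, hsp, hshape⟩ := IsStepWord.exists_pathShape_eq p
      (π.parts + Multiset.replicate (q - π.parts.card) 0) fun a ha => by
        rcases Multiset.mem_add.mp ha with ha | ha
        · exact (Nat.Partition.le_of_mem_parts ha).trans hp
        · exact (Multiset.eq_of_mem_replicate ha).le.trans p.zero_le
    have hsq : s.count (-1) = q := by
      rw [← card_pathShape, hshape, Multiset.card_add, Multiset.card_replicate]
      omega
    have hsj : (pathShape s).sum = j := by simp [hshape, π.parts_sum]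
    refine ⟨⟨s, hs, hsp, hsq, hsj⟩, Nat.Partition.ext ?_⟩
    change (pathShape s).filter (· ≠ 0) = π.parts
    rw [hshape, Multiset.filter_add, Multiset.filter_eq_self.mpr fun a ha => (π.parts_pos ha).ne',
      Multiset.filter_eq_nil.mpr fun a ha => by simp [Multiset.eq_of_mem_replicate ha], add_zero]

lemma isDyck_length_area_iff_mem_wordsOfShapeSize {n k j : ℕ} (hj : j < n)
    (hn : n * n = n + 2 * (k + j)) (s : List ℤ) :
    (IsDyck s ∧ s.length = 2 * n ∧ area s = (n : ℤ) + 2 * k) ↔ s ∈ wordsOfShapeSize n n j := by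
  zify at hn
  constructor
  · rintro ⟨⟨hsteps, -, hsum⟩, hlength, harea⟩
    have hs : IsStepWord s := isStepWord_iff_forall_mem.mpr hsteps
    rw [hs.sum_eq] at hsum
    rw [hs.length_eq] at hlength
    obtain ⟨hup, hdown⟩ : s.count 1 = n ∧ s.count (-1) = n := by omega
    have hshape := hs.two_mul_area_add_four_mul_sum_pathShape
    rw [hup, hdown, harea] at hshape
    refine ⟨hs, hup, hdown, ?_⟩
    have hsize : ((pathShape s).sum : ℤ) = j := by linarith
    exact_mod_cast hsize
  · rintro ⟨hs, hup, hdown, hsize⟩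
    have hshape := hs.two_mul_area_add_four_mul_sum_pathShape
    rw [hup, hdown, hsize] at hshape
    refine ⟨⟨isStepWord_iff_forall_mem.mp hs, ?_, ?_⟩, ?_, ?_⟩
    · exact hs.sum_take_nonneg (by omega) (by omega)
    · rw [hs.sum_eq]; omega
    · rw [hs.length_eq]; omega
    · linarith

theorem dyckAreaCount_eq_card_partition {n j : ℕ} (hj : j < n) :
    dyckAreaCount n (n * (n - 1) / 2 - j) = Fintype.card j.Partition := by
  have hjK : j ≤ n * (n - 1) / 2 := by
    obtain ⟨m, rfl⟩ := Nat.exists_eq_succ_of_ne_zero (Nat.ne_zero_of_lt hj)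
    rw [Nat.succ_eq_add_one, Nat.triangle_succ]
    omega
  have hn : n * n = n + 2 * (n * (n - 1) / 2 - j + j) := by
    rw [Nat.sub_add_cancel hjK, Nat.mul_div_cancel' (Nat.even_mul_pred_self n).two_dvd,
      Nat.mul_sub_one, Nat.add_sub_cancel' n.le_mul_self]
  rw [dyckAreaCount, ← card_wordsOfShapeSize hj.le hj.le]
  exact Nat.card_congr
    (Equiv.subtypeEquivRight (isDyck_length_area_iff_mem_wordsOfShapeSize hj hn))

lemma parts_of_partition_two (π : Nat.Partition 2) : π.parts = {2} ∨ π.parts = {1, 1} := by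
  by_cases hπ : 2 ∈ π.parts
  · obtain ⟨N, hN⟩ := Multiset.exists_cons_of_mem hπ
    have hsum : N.sum = 0 := by simpa [hN] using π.parts_sum
    have hN0 : N = 0 := Multiset.eq_zero_of_forall_notMem fun a ha =>
      (π.parts_pos (hN ▸ Multiset.mem_cons_of_mem ha)).ne' (Multiset.sum_eq_zero_iff.mp hsum a ha)
    exact .inl (by rw [hN, hN0]; rfl)
  · have hones : π.parts = Multiset.replicate π.parts.card 1 :=
      Multiset.eq_replicate_card.mpr fun a ha => by
        have hne : a ≠ 2 := ne_of_mem_of_not_mem ha hπ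
        have hpos := π.parts_pos ha
        have hle := Nat.Partition.le_of_mem_parts ha
        omega
    have hcard : π.parts.card = 2 := by
      have hsum := π.parts_sum
      rwa [hones, Multiset.sum_replicate, smul_eq_mul, mul_one] at hsum
    exact .inr (by rw [hones, hcard]; rfl)

lemma card_partition_two : Fintype.card (Nat.Partition 2) = 2 := by
  have huniv : (Finset.univ : Finset (Nat.Partition 2)) =
      {.ofSums 2 {2} rfl, .ofSums 2 {1, 1} rfl} := by
    ext π
    simp only [Finset.mem_univ, Finset.mem_insert, Finset.mem_singleton, Nat.Partition.ext_iff,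
      true_iff]
    exact parts_of_partition_two π
  rw [Fintype.card, huniv]
  exact Finset.card_pair (by decide)

/-- For `n ≥ 3`, with `K = n(n−1)/2`, the last three nonzero
terms of the sequence `(a_k)` of Dyck paths of semilength `n` by area `n + 2k`
are `a_{K−2} = 2`, `a_{K−1} = 1`, `a_K = 1`; consequently
`a_{K−1}² < a_{K−2} · a_K` and the sequence `(a_0, …, a_K)` is not log-concave. -/
theorem dyck_area_sequence_not_log_concave (n : ℕ) (hn : 3 ≤ n) (K : ℕ)
    (hK : K = n * (n - 1) / 2) :
    dyckAreaCount n K = 1 ∧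
    dyckAreaCount n (K - 1) = 1 ∧
    dyckAreaCount n (K - 2) = 2 ∧
    (dyckAreaCount n (K - 1)) ^ 2 < dyckAreaCount n (K - 2) * dyckAreaCount n K ∧
    ¬ (∀ k : ℕ, 1 ≤ k → k ≤ K - 1 →
        dyckAreaCount n (k - 1) * dyckAreaCount n (k + 1) ≤ (dyckAreaCount n k) ^ 2) := by
  have hcount (j : ℕ) (hj : j < 3) : dyckAreaCount n (K - j) = Fintype.card j.Partition :=
    hK ▸ dyckAreaCount_eq_card_partition (hj.trans_le hn)
  have hlast : dyckAreaCount n K = 1 := hcount 0 (by omega)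
  have hprev : dyckAreaCount n (K - 1) = 1 := hcount 1 (by omega)
  have hprev₂ : dyckAreaCount n (K - 2) = 2 := (hcount 2 (by omega)).trans card_partition_two
  refine ⟨hlast, hprev, hprev₂, by rw [hlast, hprev, hprev₂]; norm_num, fun hconcave => ?_⟩
  have hK₃ : 3 ≤ K := by
    rw [hK]
    exact Nat.div_le_div_right (c := 2) (Nat.mul_le_mul hn (Nat.sub_le_sub_right hn 1))
  have hle := hconcave (K - 1) (by omega) le_rfl
  rw [Nat.sub_sub, Nat.sub_add_cancel (by omega), hlast, hprev, hprev₂] at hle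
  omega
end
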